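/- Let E, H be complex Hilbert spaces and G₀, D₀, G, D as in the standing setup. The operators Ġ : BD(G) → BD(D), x ↦ Gx and Ḋ : BD(D) → BD(G), x ↦ Dx are well-defined unitary operators (bijective and inner-product preserving with respect to the graph inner products), and they are mutually adjoint and inverse: (Ġ)* = Ḋ, i.e. ⟨Ġx, w⟩_{D_D} = ⟨x, Ḋw⟩_{D_G} for all x ∈ BD(G), w ∈ BD(D), and ḊĠ = 1 on BD(G), ĠḊ = 1 on BD(D). -/

import Mathlib

open scoped ComplexInnerProductSpace
open Filter Topology Classical

noncomputable section

variable {E H : Type*}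
  [NormedAddCommGroup E] [InnerProductSpace ℂ E] [CompleteSpace E]
  [NormedAddCommGroup H] [InnerProductSpace ℂ H] [CompleteSpace H]

/-- The operator `G := (−D₀)*`. -/
def Gop (D₀ : H →ₗ.[ℂ] E) : E →ₗ.[ℂ] H := (-D₀).adjoint

/-- The operator `D := −(G₀)*`. -/
def Dop (G₀ : E →ₗ.[ℂ] H) : H →ₗ.[ℂ] E := -(G₀.adjoint)

/-- Pointwise application of `G`, defined to be `0` off the domain. -/
def Gap (D₀ : H →ₗ.[ℂ] E) (u : E) : H :=
  if h : u ∈ (Gop D₀).domain then Gop D₀ ⟨u, h⟩ else 0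

/-- Pointwise application of `D`, defined to be `0` off the domain. -/
def Dap (G₀ : E →ₗ.[ℂ] H) (w : H) : E :=
  if h : w ∈ (Dop G₀).domain then Dop G₀ ⟨w, h⟩ else 0

/-- The graph inner product of `D_G`: `⟪x,y⟫_E + ⟪Gx,Gy⟫_H`. -/
def innG (D₀ : H →ₗ.[ℂ] E) (x y : E) : ℂ := ⟪x, y⟫ + ⟪Gap D₀ x, Gap D₀ y⟫

/-- The graph inner product of `D_D`: `⟪x,y⟫_H + ⟪Dx,Dy⟫_E`. -/
def innD (G₀ : E →ₗ.[ℂ] H) (x y : H) : ℂ := ⟪x, y⟫ + ⟪Dap G₀ x, Dap G₀ y⟫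

/-- The boundary data space `BD(G)`, the orthogonal complement of `D(G₀)` in `D_G`. -/
def BDG (G₀ : E →ₗ.[ℂ] H) (D₀ : H →ₗ.[ℂ] E) : Set E :=
  {u | u ∈ (Gop D₀).domain ∧ ∀ v ∈ G₀.domain, innG D₀ u v = 0}

/-- The boundary data space `BD(D)`, the orthogonal complement of `D(D₀)` in `D_D`. -/
def BDD (G₀ : E →ₗ.[ℂ] H) (D₀ : H →ₗ.[ℂ] E) : Set H :=
  {w | w ∈ (Dop G₀).domain ∧ ∀ v ∈ D₀.domain, innD G₀ w v = 0}

/-!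
The graph of `D` consists of the pairs `(w, e)` such that `(e, w)` is orthogonal to the graph of
`G₀`. Hence `x ∈ D(G)` lies in `BD(G)` exactly when `(Gx, x)` is in the graph of `D`, that is,
`BD(G) = ker (1 - DG)`, and by symmetry `BD(D) = ker (1 - GD)`. On these two kernels `G` and `D`
invert each other, and applying them exchanges the two summands of the graph inner products.
-/

section ZeroExtend

variable {R M N : Type*} [Ring R] [AddCommGroup M] [Module R M] [AddCommGroup N] [Module R N]

/-- The total function that agrees with the partial linear map `A` on its domain and is `0`
elsewhere. By definition `Gap D₀ = zeroExtend (Gop D₀)` and `Dap G₀ = zeroExtend (Dop G₀)`, so a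
single development covers both. -/
def zeroExtend (A : M →ₗ.[R] N) (x : M) : N :=
  if h : x ∈ A.domain then A ⟨x, h⟩ else 0

theorem zeroExtend_coe (A : M →ₗ.[R] N) (x : A.domain) : zeroExtend A x = A x :=
  dif_pos x.2

theorem mem_graph_iff_zeroExtend {A : M →ₗ.[R] N} {x : M} {y : N} :
    (x, y) ∈ A.graph ↔ x ∈ A.domain ∧ zeroExtend A x = y := by
  rw [LinearPMap.mem_graph_iff]
  constructor
  · rintro ⟨v, rfl, rfl⟩
    exact ⟨v.2, zeroExtend_coe A v⟩
  · rintro ⟨hx, rfl⟩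
    exact ⟨⟨x, hx⟩, rfl, (zeroExtend_coe A ⟨x, hx⟩).symm⟩

end ZeroExtend

section GraphDuality

open scoped InnerProductSpace LinearPMap

variable {𝕜 X Y : Type*} [RCLike 𝕜]
  [NormedAddCommGroup X] [InnerProductSpace 𝕜 X]
  [NormedAddCommGroup Y] [InnerProductSpace 𝕜 Y]

/-- The graph inner product of the partial linear map `A`; it is meaningful on the domain of `A`,
and total because `A` is extended by `0`. -/
def graphInner (A : X →ₗ.[𝕜] Y) (x y : X) : 𝕜 :=
  ⟪x, y⟫_𝕜 + ⟪zeroExtend A x, zeroExtend A y⟫_𝕜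

/-- The boundary data space of an extension `A` of `A₀`: the orthogonal complement of the domain of
`A₀` in the domain of `A`, with respect to the graph inner product of `A`. -/
def boundaryData (A₀ A : X →ₗ.[𝕜] Y) : Set X :=
  {x | x ∈ A.domain ∧ ∀ v ∈ A₀.domain, graphInner A x v = 0}

/-- `D` is the negative adjoint `-G₀*`. It is encoded by the graph of `D` because
`LinearPMap.adjoint` takes junk values when the domain of `G₀` is not dense. -/
def IsNegAdjoint (D : Y →ₗ.[𝕜] X) (G₀ : X →ₗ.[𝕜] Y) : Prop :=
  ∀ w e, (w, e) ∈ D.graph ↔ ∀ v : G₀.domain, ⟪e, (v : X)⟫_𝕜 + ⟪w, G₀ v⟫_𝕜 = 0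

theorem mem_graph_adjoint_iff [CompleteSpace X] {T : X →ₗ.[𝕜] Y}
    (hT : Dense (T.domain : Set X)) {w : Y} {e : X} :
    (w, e) ∈ T†.graph ↔ ∀ v : T.domain, ⟪e, (v : X)⟫_𝕜 = ⟪w, T v⟫_𝕜 := by
  rw [LinearPMap.adjoint_graph_eq_graph_adjoint hT, Submodule.mem_adjoint_iff]
  constructor
  · intro h v
    rw [← inner_conj_symm, ← sub_eq_zero.1 (h v (T v) (T.mem_graph v)), inner_conj_symm]
  · rintro h _ _ hab
    obtain ⟨v, rfl, rfl⟩ := T.mem_graph_iff.1 hab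
    rw [sub_eq_zero, ← inner_conj_symm, ← h v, inner_conj_symm]

variable {G₀ G : X →ₗ.[𝕜] Y} {D₀ D : Y →ₗ.[𝕜] X}

theorem isNegAdjoint_neg_adjoint [CompleteSpace X] (hG₀ : Dense (G₀.domain : Set X)) :
    IsNegAdjoint (-G₀†) G₀ := by
  intro w e
  have mem_graph_neg : (w, e) ∈ (-G₀†).graph ↔ (w, -e) ∈ G₀†.graph := by
    simp only [LinearPMap.mem_graph_iff, LinearPMap.neg_apply, neg_eq_iff_eq_neg]
    rfl
  simp only [mem_graph_neg, mem_graph_adjoint_iff hG₀, inner_neg_left, neg_eq_iff_add_eq_zero]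

theorem isNegAdjoint_adjoint_neg [CompleteSpace X] (hG₀ : Dense (G₀.domain : Set X)) :
    IsNegAdjoint (-G₀)† G₀ := by
  intro w e
  rw [mem_graph_adjoint_iff (T := -G₀) hG₀]
  simp only [LinearPMap.neg_apply, inner_neg_right, ← add_eq_zero_iff_eq_neg]
  rfl

theorem IsNegAdjoint.le_symm (hG : IsNegAdjoint G D₀) (hD : IsNegAdjoint D G₀) (hle : G₀ ≤ G) :
    D₀ ≤ D := by
  refine LinearPMap.le_of_le_graph ?_
  rintro ⟨w, e⟩ hwe
  obtain ⟨d, rfl, rfl⟩ := D₀.mem_graph_iff.1 hwe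
  refine (hD _ _).2 fun v ↦ ?_
  have orthogonal : ⟪G₀ v, (d : Y)⟫_𝕜 + ⟪(v : X), D₀ d⟫_𝕜 = 0 :=
    (hG _ _).1 (LinearPMap.le_graph_of_le hle (G₀.mem_graph v)) d
  rw [← inner_conj_symm, ← inner_conj_symm (d : Y), ← map_add, add_comm, orthogonal, map_zero]

theorem mem_boundaryData_iff (hD : IsNegAdjoint D G₀) (hle : G₀ ≤ G) {x : X} :
    x ∈ boundaryData G₀ G ↔
      (x, zeroExtend G x) ∈ G.graph ∧ (zeroExtend G x, x) ∈ D.graph := by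
  have zeroExtend_eq (v : G₀.domain) : zeroExtend G v = G₀ v :=
    (mem_graph_iff_zeroExtend.1 (LinearPMap.le_graph_of_le hle (G₀.mem_graph v))).2
  simp only [boundaryData, graphInner, Set.mem_ofPred_eq, mem_graph_iff_zeroExtend (A := G),
    and_true, hD _ _, Subtype.forall', zeroExtend_eq]

theorem leftInvOn_zeroExtend_boundaryData (hD : IsNegAdjoint D G₀) (hle : G₀ ≤ G) :
    Set.LeftInvOn (zeroExtend D) (zeroExtend G) (boundaryData G₀ G) := fun _ hx ↦
  (mem_graph_iff_zeroExtend.1 ((mem_boundaryData_iff hD hle).1 hx).2).2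

theorem mapsTo_zeroExtend_boundaryData (hG : IsNegAdjoint G D₀) (hD : IsNegAdjoint D G₀)
    (hle : G₀ ≤ G) :
    Set.MapsTo (zeroExtend G) (boundaryData G₀ G) (boundaryData D₀ D) := by
  intro x hx
  rw [mem_boundaryData_iff hG (hG.le_symm hD hle), leftInvOn_zeroExtend_boundaryData hD hle hx]
  exact ((mem_boundaryData_iff hD hle).1 hx).symm

theorem graphInner_zeroExtend_left {x : X} {w : Y} (hx : zeroExtend D (zeroExtend G x) = x)
    (hw : zeroExtend G (zeroExtend D w) = w) :
    graphInner D (zeroExtend G x) w = graphInner G x (zeroExtend D w) := by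
  rw [graphInner, graphInner, hx, hw, add_comm]

theorem graphInner_zeroExtend_zeroExtend {x y : X} (hx : zeroExtend D (zeroExtend G x) = x)
    (hy : zeroExtend D (zeroExtend G y) = y) :
    graphInner D (zeroExtend G x) (zeroExtend G y) = graphInner G x y := by
  rw [graphInner_zeroExtend_left hx (congrArg _ hy), hy]

theorem bdg_unitaries_general (hG : IsNegAdjoint G D₀) (hD : IsNegAdjoint D G₀) (hle : G₀ ≤ G) :
    (∀ u ∈ boundaryData G₀ G, zeroExtend G u ∈ boundaryData D₀ D) ∧
    (∀ w ∈ boundaryData D₀ D, zeroExtend D w ∈ boundaryData G₀ G) ∧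
    Set.BijOn (zeroExtend G) (boundaryData G₀ G) (boundaryData D₀ D) ∧
    Set.BijOn (zeroExtend D) (boundaryData D₀ D) (boundaryData G₀ G) ∧
    (∀ x ∈ boundaryData G₀ G, ∀ y ∈ boundaryData G₀ G,
      graphInner D (zeroExtend G x) (zeroExtend G y) = graphInner G x y) ∧
    (∀ w ∈ boundaryData D₀ D, ∀ z ∈ boundaryData D₀ D,
      graphInner G (zeroExtend D w) (zeroExtend D z) = graphInner D w z) ∧
    (∀ x ∈ boundaryData G₀ G, zeroExtend D (zeroExtend G x) = x) ∧
    (∀ w ∈ boundaryData D₀ D, zeroExtend G (zeroExtend D w) = w) ∧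
    (∀ x ∈ boundaryData G₀ G, ∀ w ∈ boundaryData D₀ D,
      graphInner D (zeroExtend G x) w = graphInner G x (zeroExtend D w)) := by
  have hle' : D₀ ≤ D := hG.le_symm hD hle
  have mapsG := mapsTo_zeroExtend_boundaryData hG hD hle
  have mapsD := mapsTo_zeroExtend_boundaryData hD hG hle'
  have invG := leftInvOn_zeroExtend_boundaryData hD hle
  have invD := leftInvOn_zeroExtend_boundaryData hG hle'
  exact ⟨mapsG, mapsD, Set.InvOn.bijOn ⟨invG, invD⟩ mapsG mapsD,
    Set.InvOn.bijOn ⟨invD, invG⟩ mapsD mapsG,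
    fun _ hx _ hy ↦ graphInner_zeroExtend_zeroExtend (invG hx) (invG hy),
    fun _ hw _ hz ↦ graphInner_zeroExtend_zeroExtend (invD hw) (invD hz),
    invG, invD, fun _ hx _ hw ↦ graphInner_zeroExtend_left (invG hx) (invD hw)⟩

end GraphDuality

/-- The operators `Ġ : BD(G) → BD(D), x ↦ Gx` and `Ḋ : BD(D) → BD(G), x ↦ Dx` are well-defined
unitary operators (bijective and preserving the graph inner products), they are mutually inverse
(`ḊĠ = 1` on `BD(G)` and `ĠḊ = 1` on `BD(D)`) and mutually adjoint
(`⟪Ġx, w⟫_{D_D} = ⟪x, Ḋw⟫_{D_G}` for `x ∈ BD(G)`, `w ∈ BD(D)`). -/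
theorem bdg_unitaries (G₀ : E →ₗ.[ℂ] H) (D₀ : H →ₗ.[ℂ] E)
    (hG₀dense : Dense (G₀.domain : Set E)) (hD₀dense : Dense (D₀.domain : Set H))
    (hG₀closed : G₀.IsClosed) (hD₀closed : D₀.IsClosed)
    (hsub : G₀ ≤ Gop D₀) :
    -- well-defined
    (∀ u ∈ BDG G₀ D₀, Gap D₀ u ∈ BDD G₀ D₀) ∧
    (∀ w ∈ BDD G₀ D₀, Dap G₀ w ∈ BDG G₀ D₀) ∧
    -- bijective
    Set.BijOn (Gap D₀) (BDG G₀ D₀) (BDD G₀ D₀) ∧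
    Set.BijOn (Dap G₀) (BDD G₀ D₀) (BDG G₀ D₀) ∧
    -- inner-product preserving (unitarity)
    (∀ x ∈ BDG G₀ D₀, ∀ y ∈ BDG G₀ D₀, innD G₀ (Gap D₀ x) (Gap D₀ y) = innG D₀ x y) ∧
    (∀ w ∈ BDD G₀ D₀, ∀ z ∈ BDD G₀ D₀, innG D₀ (Dap G₀ w) (Dap G₀ z) = innD G₀ w z) ∧
    -- mutually inverse: ḊĠ = 1 and ĠḊ = 1
    (∀ x ∈ BDG G₀ D₀, Dap G₀ (Gap D₀ x) = x) ∧
    (∀ w ∈ BDD G₀ D₀, Gap D₀ (Dap G₀ w) = w) ∧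
    -- mutually adjoint: (Ġ)* = Ḋ
    (∀ x ∈ BDG G₀ D₀, ∀ w ∈ BDD G₀ D₀, innD G₀ (Gap D₀ x) w = innG D₀ x (Dap G₀ w)) :=
  bdg_unitaries_general (isNegAdjoint_adjoint_neg hD₀dense) (isNegAdjoint_neg_adjoint hG₀dense) hsub
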